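/- Let (μ_n) and μ be probability measures on ℝ with Stieltjes transforms f_n and f respectively. If f_n(z) → f(z) for every z in the upper half-plane, then μ_n converges weakly (in distribution) to μ. -/

import Mathlib

open MeasureTheory Complex Filter

/-!
By the resolvent identity `(x - z)⁻¹ - (x - w)⁻¹ = (z - w) (x - z)⁻¹ (x - w)⁻¹`, and by letting
`w → z` in it, the closed linear span of `1` and the functions `x ↦ (x - z)⁻¹` with `z` non-real is
a star subalgebra of the continuous functions on the one-point compactification of `ℝ`. It separates
points, so it is everything by Stone–Weierstrass. As the integration functionals are uniformly
bounded, convergence of the Stieltjes transforms thus gives convergence of the integrals of all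
continuous functions having a limit at infinity, in particular of the compactly supported ones. No
mass can then escape to infinity, because the total masses converge as well.
-/

open scoped Topology BoundedContinuousFunction CompactlySupported ComplexConjugate

section BoundedFunctionals

variable {𝕜 E F ι : Type*} [NontriviallyNormedField 𝕜] [SeminormedAddCommGroup E]
  [NormedSpace 𝕜 E] [SeminormedAddCommGroup F] [NormedSpace 𝕜 F] {l : Filter ι}

lemma tendsto_apply_of_mem_closure {L : ι → E →L[𝕜] F} {L₀ : E →L[𝕜] F} {C : ℝ}
    (hC : ∀ᶠ i in l, ‖L i‖ ≤ C) {s : Set E}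
    (hs : ∀ x ∈ s, Tendsto (fun i => L i x) l (𝓝 (L₀ x))) {x : E} (hx : x ∈ closure s) :
    Tendsto (fun i => L i x) l (𝓝 (L₀ x)) := by
  have hbound : ∀ y, ∀ᶠ i in l,
      ‖L i x - L₀ x‖ ≤ ‖L i y - L₀ y‖ + (C + ‖L₀‖) * ‖x - y‖ := by
    intro y
    filter_upwards [hC] with i hi
    calc ‖L i x - L₀ x‖ = ‖(L i y - L₀ y) + (L i - L₀) (x - y)‖ := by
          congr 1
          simp only [sub_apply, map_sub]
          abel
      _ ≤ ‖L i y - L₀ y‖ + ‖L i - L₀‖ * ‖x - y‖ :=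
          norm_add_le_of_le le_rfl ((L i - L₀).le_opNorm _)
      _ ≤ ‖L i y - L₀ y‖ + (C + ‖L₀‖) * ‖x - y‖ := by grw [norm_sub_le (L i), hi]
  have hsmall : Tendsto (fun y => (C + ‖L₀‖) * ‖x - y‖) (𝓝 x) (𝓝 0) :=
    Continuous.tendsto' (by fun_prop) _ _ (by simp)
  rw [tendsto_iff_norm_sub_tendsto_zero, Metric.tendsto_nhds]
  intro ε hε
  obtain ⟨y, (hyε : _ < ε / 2), hys⟩ :=
    mem_closure_iff_nhds.mp hx _ (hsmall.eventually (gt_mem_nhds (half_pos hε)))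
  filter_upwards [hbound y,
    (tendsto_iff_norm_sub_tendsto_zero.mp (hs y hys)).eventually (gt_mem_nhds (half_pos hε))]
    with i hi hyi
  rw [dist_zero_right, norm_norm]
  exact hi.trans_lt (by linarith)

lemma tendsto_apply_of_topologicalClosure_span_eq_top {L : ι → E →L[𝕜] F} {L₀ : E →L[𝕜] F}
    {C : ℝ} (hC : ∀ᶠ i in l, ‖L i‖ ≤ C) {s : Set E}
    (hspan : (Submodule.span 𝕜 s).topologicalClosure = ⊤)
    (hs : ∀ x ∈ s, Tendsto (fun i => L i x) l (𝓝 (L₀ x))) (x : E) :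
    Tendsto (fun i => L i x) l (𝓝 (L₀ x)) := by
  refine tendsto_apply_of_mem_closure hC (s := Submodule.span 𝕜 s) (fun y hy => ?_)
    (Submodule.dense_iff_topologicalClosure_eq_top.mpr hspan x)
  induction hy using Submodule.span_induction with
  | mem y hy => exact hs y hy
  | zero => simpa using tendsto_const_nhds
  | add y z _ _ hy hz => simpa using hy.add hz
  | smul c y _ hy => simpa using hy.const_smul c

end BoundedFunctionals

section StoneWeierstrass

lemma mul_mem_topologicalClosure_span {𝕜 A : Type*} [CommSemiring 𝕜] [Semiring A] [Algebra 𝕜 A]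
    [TopologicalSpace A] [IsTopologicalSemiring A] [ContinuousConstSMul 𝕜 A] {s : Set A}
    (hmul : ∀ a ∈ s, ∀ b ∈ s, a * b ∈ (Submodule.span 𝕜 s).topologicalClosure) {a b : A}
    (ha : a ∈ (Submodule.span 𝕜 s).topologicalClosure)
    (hb : b ∈ (Submodule.span 𝕜 s).topologicalClosure) :
    a * b ∈ (Submodule.span 𝕜 s).topologicalClosure := by
  have hspan : Submodule.span 𝕜 s * Submodule.span 𝕜 s ≤
      (Submodule.span 𝕜 s).topologicalClosure := by
    rw [Submodule.span_mul_span, Submodule.span_le]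
    exact Set.mul_subset_iff.mpr hmul
  rw [← (Submodule.isClosed_topologicalClosure _).submodule_topologicalClosure_eq]
  exact map_mem_closure₂ continuous_mul ha hb fun x hx y hy => hspan (Submodule.mul_mem_mul hx hy)

lemma topologicalClosure_span_eq_top_of_separatesPoints {𝕜 K : Type*} [RCLike 𝕜]
    [TopologicalSpace K] [CompactSpace K] {s : Set C(K, 𝕜)} (hone : 1 ∈ s)
    (hmul : ∀ f ∈ s, ∀ g ∈ s, f * g ∈ (Submodule.span 𝕜 s).topologicalClosure)
    (hstar : ∀ f ∈ s, star f ∈ s) (hsep : ((⇑) '' s).SeparatesPoints) :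
    (Submodule.span 𝕜 s).topologicalClosure = ⊤ := by
  have hspan : s ⊆ (Submodule.span 𝕜 s).topologicalClosure :=
    Submodule.subset_span.trans (Submodule.le_topologicalClosure _)
  have hadjoin : (StarAlgebra.adjoin 𝕜 s : Set C(K, 𝕜)) ⊆
      (Submodule.span 𝕜 s).topologicalClosure := by
    intro f (hf : f ∈ Algebra.adjoin 𝕜 (s ∪ star s))
    induction hf using Algebra.adjoin_induction with
    | mem f hf => exact hspan (hf.elim id fun hf => star_star f ▸ hstar _ hf)
    | algebraMap c =>
      rw [Algebra.algebraMap_eq_smul_one]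
      exact Submodule.smul_mem _ c (hspan hone)
    | add f g _ _ hf hg => exact Submodule.add_mem _ hf hg
    | mul f g _ _ hf hg => exact mul_mem_topologicalClosure_span hmul hf hg
  have hdense : (StarAlgebra.adjoin 𝕜 s).topologicalClosure = ⊤ :=
    ContinuousMap.starSubalgebra_topologicalClosure_eq_top_of_separatesPoints _ fun _ _ hxy =>
      let ⟨f, hf, hne⟩ := hsep hxy
      ⟨f, Set.image_mono (StarAlgebra.subset_adjoin 𝕜 s) hf, hne⟩
  refine eq_top_iff.mpr fun f _ => ?_
  have hf : f ∈ (StarAlgebra.adjoin 𝕜 s).topologicalClosure := hdense ▸ StarSubalgebra.mem_top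
  exact closure_minimal hadjoin (Submodule.isClosed_topologicalClosure _) hf

end StoneWeierstrass

section StieltjesKernel

lemma ofReal_sub_ne_zero {z : ℂ} (hz : z.im ≠ 0) (x : ℝ) : (x : ℂ) - z ≠ 0 :=
  fun h => hz (by simpa using congrArg im h)

lemma tendsto_inv_ofReal_sub_cocompact (z : ℂ) :
    Tendsto (fun x : ℝ => ((x : ℂ) - z)⁻¹) (cocompact ℝ) (𝓝 0) := by
  rw [← Metric.cobounded_eq_cocompact]
  exact tendsto_inv₀_cobounded.comp
    ((tendsto_sub_const_cobounded z).comp (RCLike.tendsto_ofReal_cobounded_cobounded ℂ))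

/-- The Stieltjes kernel `x ↦ (x - z)⁻¹` of a non-real `z`, extended by `0` to the point at
infinity of the one-point compactification of `ℝ`. -/
noncomputable def stieltjesKernel (z : {z : ℂ // z.im ≠ 0}) : C(OnePoint ℝ, ℂ) :=
  OnePoint.continuousMapMk
    ⟨fun x : ℝ => ((x : ℂ) - z)⁻¹,
      (continuous_ofReal.sub continuous_const).inv₀ (ofReal_sub_ne_zero z.2)⟩
    0 (by simpa using tendsto_inv_ofReal_sub_cocompact z)

namespace stieltjesKernel

@[simp]
lemma apply_coe (z : {z : ℂ // z.im ≠ 0}) (x : ℝ) :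
    stieltjesKernel z x = ((x : ℂ) - z)⁻¹ := rfl

@[simp]
lemma apply_infty (z : {z : ℂ // z.im ≠ 0}) : stieltjesKernel z OnePoint.infty = 0 := rfl

lemma norm_le (z : {z : ℂ // z.im ≠ 0}) : ‖stieltjesKernel z‖ ≤ |(z : ℂ).im|⁻¹ := by
  refine (ContinuousMap.norm_le _ (by positivity)).mpr fun x => ?_
  induction x with
  | infty => simp
  | coe x =>
    rw [apply_coe, norm_inv]
    refine inv_anti₀ (abs_pos.mpr z.2) ?_
    simpa using abs_im_le_norm ((x : ℂ) - z)

lemma injective (z : {z : ℂ // z.im ≠ 0}) : Function.Injective (stieltjesKernel z) := by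
  intro x y hxy
  induction x <;> induction y <;> simp_all [ofReal_sub_ne_zero z.2, eq_comm]

lemma star_eq (z : {z : ℂ // z.im ≠ 0}) :
    star (stieltjesKernel z) = stieltjesKernel ⟨conj (z : ℂ), by simpa using z.2⟩ := by
  ext x
  induction x <;> simp

lemma sub_eq_smul_mul (z w : {z : ℂ // z.im ≠ 0}) :
    stieltjesKernel z - stieltjesKernel w =
      (z - w : ℂ) • (stieltjesKernel z * stieltjesKernel w) := by
  ext x
  induction x with
  | infty => simp
  | coe x =>
    have hz := ofReal_sub_ne_zero z.2 x
    have hw := ofReal_sub_ne_zero w.2 x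
    simp only [ContinuousMap.sub_apply, ContinuousMap.smul_apply, ContinuousMap.mul_apply,
      apply_coe, smul_eq_mul]
    field_simp
    ring

protected lemma continuous : Continuous stieltjesKernel := by
  refine continuous_iff_continuousAt.mpr fun z => tendsto_iff_norm_sub_tendsto_zero.mpr ?_
  have hbound (w : {z : ℂ // z.im ≠ 0}) : ‖stieltjesKernel w - stieltjesKernel z‖ ≤
      ‖(w - z : ℂ)‖ * (|(w : ℂ).im|⁻¹ * |(z : ℂ).im|⁻¹) := by
    grw [sub_eq_smul_mul, norm_smul, norm_mul_le, norm_le, norm_le]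
  refine squeeze_zero (fun _ => norm_nonneg _) hbound (Continuous.tendsto' ?_ _ _ (by simp))
  have him : Continuous fun w : {z : ℂ // z.im ≠ 0} => |(w : ℂ).im|⁻¹ :=
    (by fun_prop : Continuous fun w : {z : ℂ // z.im ≠ 0} => |(w : ℂ).im|).inv₀
      fun w => abs_ne_zero.mpr w.2
  fun_prop

lemma mul_mem_span_range {z w : {z : ℂ // z.im ≠ 0}} (hzw : z ≠ w) :
    stieltjesKernel z * stieltjesKernel w ∈ Submodule.span ℂ (Set.range stieltjesKernel) := by
  have hne : (z - w : ℂ) ≠ 0 := sub_ne_zero.mpr (Subtype.coe_injective.ne hzw)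
  rw [← inv_smul_smul₀ hne (stieltjesKernel z * stieltjesKernel w), ← sub_eq_smul_mul]
  exact Submodule.smul_mem _ _ <| Submodule.sub_mem _
    (Submodule.subset_span ⟨z, rfl⟩) (Submodule.subset_span ⟨w, rfl⟩)

lemma mul_mem_topologicalClosure_span_range (z w : {z : ℂ // z.im ≠ 0}) :
    stieltjesKernel z * stieltjesKernel w ∈
      (Submodule.span ℂ (Set.range stieltjesKernel)).topologicalClosure := by
  rcases ne_or_eq z w with hzw | rfl
  · exact Submodule.le_topologicalClosure _ (mul_mem_span_range hzw)
  let shift (t : ℝ) : {z : ℂ // z.im ≠ 0} := ⟨z + t, by simpa using z.2⟩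
  have hcont : Continuous fun t => stieltjesKernel z * stieltjesKernel (shift t) :=
    continuous_const.mul (stieltjesKernel.continuous.comp (by fun_prop))
  have hlim : Tendsto (fun t => stieltjesKernel z * stieltjesKernel (shift t)) (𝓝[≠] 0)
      (𝓝 (stieltjesKernel z * stieltjesKernel z)) :=
    (hcont.tendsto' 0 _ (by simp [shift])).mono_left nhdsWithin_le_nhds
  refine mem_closure_of_tendsto hlim ?_
  filter_upwards [self_mem_nhdsWithin] with t ht
  exact mul_mem_span_range fun h => ht (by simpa [shift] using congrArg Subtype.val h)

lemma topologicalClosure_span_eq_top :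
    (Submodule.span ℂ (insert 1 (Set.range stieltjesKernel))).topologicalClosure = ⊤ := by
  have hrange : Set.range stieltjesKernel ⊆ insert 1 (Set.range stieltjesKernel) :=
    Set.subset_insert _ _
  have hmem {f} (hf : f ∈ insert 1 (Set.range stieltjesKernel)) :
      f ∈ (Submodule.span ℂ (insert 1 (Set.range stieltjesKernel))).topologicalClosure :=
    Submodule.le_topologicalClosure _ (Submodule.subset_span hf)
  refine topologicalClosure_span_eq_top_of_separatesPoints (Set.mem_insert _ _) ?_ ?_ ?_
  · rintro f hf g hg
    rcases hf with rfl | ⟨z, rfl⟩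
    · simpa using hmem hg
    rcases hg with rfl | ⟨w, rfl⟩
    · simpa using hmem (hrange ⟨z, rfl⟩)
    exact Submodule.topologicalClosure_mono (Submodule.span_mono hrange)
      (mul_mem_topologicalClosure_span_range z w)
  · rintro f (rfl | ⟨z, rfl⟩)
    · simp
    · exact hrange ⟨_, (star_eq z).symm⟩
  · intro x y hxy
    let z : {z : ℂ // z.im ≠ 0} := ⟨I, by simp⟩
    exact ⟨_, ⟨_, hrange ⟨z, rfl⟩, rfl⟩, (injective z).ne hxy⟩

end stieltjesKernel

end StieltjesKernel

section IntegralCompCLM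

variable {X K 𝕜 : Type*} [TopologicalSpace X] [MeasurableSpace X] [TopologicalSpace K]
  [CompactSpace K] [RCLike 𝕜] (φ : C(X, K)) (μ : Measure X) [IsFiniteMeasure μ]

lemma norm_integral_comp_le (f : C(K, 𝕜)) : ‖∫ x, f (φ x) ∂μ‖ ≤ μ.real Set.univ * ‖f‖ :=
  mul_comm ‖f‖ _ ▸ norm_integral_le_of_norm_le_const (ae_of_all _ fun _ => f.norm_coe_le_norm _)

variable [OpensMeasurableSpace X]

lemma integrable_comp_of_compactSpace (f : C(K, 𝕜)) : Integrable (fun x => f (φ x)) μ :=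
  ((BoundedContinuousFunction.mkOfCompact f).compContinuous φ).integrable μ

/-- Integration of `f ∘ φ` against `μ`, as a continuous linear functional of `f : C(K, 𝕜)`; it is
integration against the push-forward of `μ`, with no measurable structure needed on `K`. -/
noncomputable def integralCompCLM : C(K, 𝕜) →L[𝕜] 𝕜 :=
  LinearMap.mkContinuous
    { toFun := fun f => ∫ x, f (φ x) ∂μ
      map_add' := fun f g => integral_add (integrable_comp_of_compactSpace φ μ f)
        (integrable_comp_of_compactSpace φ μ g)
      map_smul' := fun c f => integral_const_mul c fun x => f (φ x) }
    (μ.real Set.univ) (norm_integral_comp_le φ μ)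

@[simp]
lemma integralCompCLM_apply (f : C(K, 𝕜)) : integralCompCLM φ μ f = ∫ x, f (φ x) ∂μ := rfl

lemma norm_integralCompCLM_le : ‖integralCompCLM (𝕜 := 𝕜) φ μ‖ ≤ μ.real Set.univ :=
  LinearMap.mkContinuous_norm_le _ measureReal_nonneg _

end IntegralCompCLM

section VagueConvergence

variable {X ι : Type*} [TopologicalSpace X] [NormalSpace X] [R1Space X]
  [WeaklyLocallyCompactSpace X] [MeasurableSpace X] [BorelSpace X] {μ : Measure X} [μ.Regular]

lemma exists_compactlySupported_le_of_lt_integral {f : X → ℝ} (hf : Continuous f)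
    (hfi : Integrable f μ) (hf0 : 0 ≤ f) {c : ℝ} (hc : c < ∫ x, f x ∂μ) :
    ∃ h : C_c(X, ℝ), ⇑h ≤ f ∧ c < ∫ x, h x ∂μ := by
  obtain ⟨g, hg_supp, hg_int, hg_cont, hgi⟩ :=
    hfi.exists_hasCompactSupport_integral_sub_le (half_pos (sub_pos.mpr hc))
  let h : C_c(X, ℝ) := ⟨⟨fun x => min (f x) (max (g x) 0), by fun_prop⟩, by
    refine hg_supp.mono fun x hx => ?_
    contrapose! hx
    simpa [Function.notMem_support.mp hx] using hf0 x⟩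
  have hhi : Integrable (fun x => h x) μ := hfi.inf (hgi.sup (integrable_zero _ _ _))
  have hdist : ∫ x, f x ∂μ - ∫ x, h x ∂μ ≤ ∫ x, ‖f x - g x‖ ∂μ := by
    rw [← integral_sub hfi hhi]
    refine integral_mono (hfi.sub hhi) (hfi.sub hgi).norm fun x => ?_
    change f x - min (f x) (max (g x) 0) ≤ |f x - g x|
    have := hf0 x
    grind
  exact ⟨h, fun x => min_le_left _ _, by linarith⟩

variable {l : Filter ι} {μs : ι → Measure X} [∀ i, IsFiniteMeasure (μs i)]

lemma eventually_lt_integral_of_nonneg_of_tendsto_compactlySupported [IsFiniteMeasure μ]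
    (hvague : ∀ h : C_c(X, ℝ), Tendsto (fun i => ∫ x, h x ∂μs i) l (𝓝 (∫ x, h x ∂μ)))
    {f : X →ᵇ ℝ} (hf0 : 0 ≤ ⇑f) {c : ℝ} (hc : c < ∫ x, f x ∂μ) :
    ∀ᶠ i in l, c < ∫ x, f x ∂μs i := by
  obtain ⟨h, hhf, hch⟩ :=
    exists_compactlySupported_le_of_lt_integral f.continuous (f.integrable μ) hf0 hc
  filter_upwards [(hvague h).eventually (lt_mem_nhds hch)] with i hi
  exact hi.trans_le <| integral_mono
    (h.continuous.integrable_of_hasCompactSupport h.hasCompactSupport) (f.integrable _) hhf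

lemma eventually_lt_integral_of_tendsto_compactlySupported [IsFiniteMeasure μ]
    (hmass : Tendsto (fun i => (μs i).real Set.univ) l (𝓝 (μ.real Set.univ)))
    (hvague : ∀ h : C_c(X, ℝ), Tendsto (fun i => ∫ x, h x ∂μs i) l (𝓝 (∫ x, h x ∂μ)))
    (g : X →ᵇ ℝ) {c : ℝ} (hc : c < ∫ x, g x ∂μ) :
    ∀ᶠ i in l, c < ∫ x, g x ∂μs i := by
  obtain ⟨d, hcd, hdg⟩ := exists_between hc
  have hshift : d + μ.real Set.univ * ‖g‖ <
      ∫ x, (g + BoundedContinuousFunction.const X ‖g‖) x ∂μ := by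
    rw [g.integral_add_const, smul_eq_mul]
    gcongr
  have hmass' : ∀ᶠ i in l, (μs i).real Set.univ * ‖g‖ < μ.real Set.univ * ‖g‖ + (d - c) :=
    (hmass.mul_const ‖g‖).eventually (gt_mem_nhds (by linarith))
  filter_upwards [hmass', eventually_lt_integral_of_nonneg_of_tendsto_compactlySupported hvague
    g.add_norm_nonneg hshift] with i hmi hi
  rw [g.integral_add_const, smul_eq_mul] at hi
  linarith

theorem tendsto_integral_of_tendsto_integral_compactlySupported [IsFiniteMeasure μ]
    (hmass : Tendsto (fun i => (μs i).real Set.univ) l (𝓝 (μ.real Set.univ)))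
    (hvague : ∀ h : C_c(X, ℝ), Tendsto (fun i => ∫ x, h x ∂μs i) l (𝓝 (∫ x, h x ∂μ)))
    (g : X →ᵇ ℝ) : Tendsto (fun i => ∫ x, g x ∂μs i) l (𝓝 (∫ x, g x ∂μ)) := by
  refine tendsto_order.mpr
    ⟨fun c => eventually_lt_integral_of_tendsto_compactlySupported hmass hvague g, fun c hc => ?_⟩
  have hneg : -c < ∫ x, (-g) x ∂μ := by simpa [integral_neg] using hc
  filter_upwards [eventually_lt_integral_of_tendsto_compactlySupported hmass hvague (-g) hneg]
    with i hi
  simpa [integral_neg] using hi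

end VagueConvergence

section StieltjesTransform

variable {ι : Type*} {l : Filter ι} {μs : ι → Measure ℝ} {μ : Measure ℝ}

lemma tendsto_integral_inv_sub_of_im_ne_zero
    (h : ∀ z : ℂ, 0 < z.im → Tendsto (fun i => ∫ x : ℝ, ((x : ℂ) - z)⁻¹ ∂μs i) l
      (𝓝 (∫ x : ℝ, ((x : ℂ) - z)⁻¹ ∂μ))) {z : ℂ} (hz : z.im ≠ 0) :
    Tendsto (fun i => ∫ x : ℝ, ((x : ℂ) - z)⁻¹ ∂μs i) l (𝓝 (∫ x : ℝ, ((x : ℂ) - z)⁻¹ ∂μ)) := by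
  rcases hz.lt_or_gt with hneg | hpos
  · have hconj (ν : Measure ℝ) :
        conj (∫ x : ℝ, ((x : ℂ) - conj z)⁻¹ ∂ν) = ∫ x : ℝ, ((x : ℂ) - z)⁻¹ ∂ν := by
      simp [← integral_conj]
    simpa only [Function.comp_def, hconj] using
      (continuous_conj.tendsto _).comp (h (conj z) (by simpa using hneg))
  · exact h z hpos

variable [∀ i, IsFiniteMeasure (μs i)] [IsFiniteMeasure μ]

lemma tendsto_integral_onePoint
    (hmass : Tendsto (fun i => (μs i).real Set.univ) l (𝓝 (μ.real Set.univ)))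
    (h : ∀ z : ℂ, 0 < z.im → Tendsto (fun i => ∫ x : ℝ, ((x : ℂ) - z)⁻¹ ∂μs i) l
      (𝓝 (∫ x : ℝ, ((x : ℂ) - z)⁻¹ ∂μ))) (f : C(OnePoint ℝ, ℂ)) :
    Tendsto (fun i => ∫ x : ℝ, f x ∂μs i) l (𝓝 (∫ x : ℝ, f x ∂μ)) := by
  let coe : C(ℝ, OnePoint ℝ) := ⟨(↑), OnePoint.continuous_coe⟩
  have hbound : ∀ᶠ i in l, ‖integralCompCLM (𝕜 := ℂ) coe (μs i)‖ ≤ μ.real Set.univ + 1 := by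
    filter_upwards [hmass.eventually (gt_mem_nhds (lt_add_one _))] with i hi
    exact (norm_integralCompCLM_le coe (μs i)).trans hi.le
  refine tendsto_apply_of_topologicalClosure_span_eq_top (L₀ := integralCompCLM coe μ) hbound
    stieltjesKernel.topologicalClosure_span_eq_top ?_ f
  rintro _ (rfl | ⟨z, rfl⟩)
  · simpa [Function.comp_def] using (continuous_ofReal.tendsto _).comp hmass
  · exact tendsto_integral_inv_sub_of_im_ne_zero h z.2

theorem stieltjes_convergence_implies_weak_convergence_general
    (hmass : Tendsto (fun i => (μs i).real Set.univ) l (𝓝 (μ.real Set.univ)))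
    (h : ∀ z : ℂ, 0 < z.im → Tendsto (fun i => ∫ x : ℝ, ((x : ℂ) - z)⁻¹ ∂μs i) l
      (𝓝 (∫ x : ℝ, ((x : ℂ) - z)⁻¹ ∂μ))) (g : ℝ →ᵇ ℝ) :
    Tendsto (fun i => ∫ x, g x ∂μs i) l (𝓝 (∫ x, g x ∂μ)) := by
  refine tendsto_integral_of_tendsto_integral_compactlySupported hmass (fun f => ?_) g
  have hzero : Tendsto (fun x => (f x : ℂ)) (coclosedCompact ℝ) (𝓝 0) := by
    simpa [Function.comp_def] using
      (continuous_ofReal.tendsto 0).comp f.hasCompactSupport.is_zero_at_infty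
  let F : C(OnePoint ℝ, ℂ) :=
    OnePoint.continuousMapMk ⟨fun x => (f x : ℂ), by fun_prop⟩ 0 hzero
  have hF (ν : Measure ℝ) : ∫ x : ℝ, F x ∂ν = (∫ x, f x ∂ν : ℝ) := integral_ofReal
  simpa only [hF, tendsto_ofReal_iff] using tendsto_integral_onePoint hmass h F

end StieltjesTransform

theorem stieltjes_convergence_implies_weak_convergence
    (μn : ℕ → Measure ℝ) (μ : Measure ℝ)
    [∀ n, IsProbabilityMeasure (μn n)] [IsProbabilityMeasure μ]
    (h : ∀ z : ℂ, 0 < z.im →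
      Tendsto (fun n => ∫ lam : ℝ, ((lam : ℂ) - z)⁻¹ ∂(μn n)) atTop
        (nhds (∫ lam : ℝ, ((lam : ℂ) - z)⁻¹ ∂μ))) :
    ∀ g : BoundedContinuousFunction ℝ ℝ,
      Tendsto (fun n => ∫ x, g x ∂(μn n)) atTop (nhds (∫ x, g x ∂μ)) :=
  stieltjes_convergence_implies_weak_convergence_general (by simp) h
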